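/- If G is a bridgeless cubic graph, then for any two edges e and f of G there exists a 2-factor of G containing both e and f. -/

import Mathlib

/-! Multigraphs: vertex type `V`, edge type `E`, incidence map `ends : E → Sym2 V`. -/

namespace Mg

variable {V E : Type}

/-- No loops: no edge has equal endpoints. -/
def NoLoops (ends : E → Sym2 V) : Prop := ∀ e, ¬ (ends e).IsDiag

/-- Cubic: every vertex is incident with exactly three edges. -/
def IsCubic (ends : E → Sym2 V) : Prop := ∀ v, {e | v ∈ ends e}.ncard = 3

/-- Reachability using only edges in `F`. -/
def Reach (ends : E → Sym2 V) (F : Set E) : V → V → Prop :=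
  Relation.ReflTransGen (fun a b => ∃ e ∈ F, ends e = s(a, b))

/-- Connected. -/
def Connected (ends : E → Sym2 V) : Prop := ∀ v w, Reach ends Set.univ v w

/-- Bridgeless: the endpoints of each edge remain joined after its removal. -/
def Bridgeless (ends : E → Sym2 V) : Prop :=
  ∀ e v w, ends e = s(v, w) → Reach ends {f | f ≠ e} v w

/-- A 2-factor: every vertex is incident with exactly two edges of `F`. -/
def IsTwoFactor (ends : E → Sym2 V) (F : Set E) : Prop :=
  ∀ v, {e | e ∈ F ∧ v ∈ ends e}.ncard = 2

/-- The component of `v` in the spanning subgraph with edge set `F`. -/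
def component (ends : E → Sym2 V) (F : Set E) (v : V) : Set V := {w | Reach ends F v w}

/-- Every 2-factor consists only of 5-cycles: each component of any 2-factor
has exactly five vertices. -/
def TwoFactorsAllC5 (ends : E → Sym2 V) : Prop :=
  ∀ F : Set E, IsTwoFactor ends F → ∀ v, (component ends F v).ncard = 5

/-- A perfect matching: every vertex is incident with exactly one edge of `M`. -/
def IsPerfectMatching (ends : E → Sym2 V) (M : Set E) : Prop :=
  ∀ v, ∃! e, e ∈ M ∧ v ∈ ends e

/-- A cycle of length `n`: `n` distinct vertices and `n` distinct edges, cyclically. -/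
def HasCycle (ends : E → Sym2 V) (n : ℕ) : Prop :=
  ∃ (c : ZMod n → V) (f : ZMod n → E), Function.Injective c ∧ Function.Injective f ∧
    ∀ i, ends (f i) = s(c i, c (i + 1))

end Mg

/-!
Pass to complements: it suffices to find a perfect matching avoiding `e` and `f`. If there is none,
Tutte's theorem and parity give a vertex set `S` such that deleting `S`, `e` and `f` leaves at
least `|S| + 2` odd components. In the original graph each of them has an odd boundary, which is
not a single edge because there are no bridges, so there are at least `3 (|S| + 2)` pairs
(component, boundary edge). But `S` accounts for at most `3 |S|` of these pairs and `e`, `f` for at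
most two each, a total of `3 |S| + 4`. The count works verbatim with `r` in place of `3` and fewer
than `r` deleted edges.
-/

namespace Mg

open Finset

section Boundary

variable {V E : Type*} [DecidableEq V] [Fintype E] {ends : E → Sym2 V}

lemma sum_card_filter_mem_ends (ends : E → Sym2 V) (C : Finset V) :
    ∑ a, #{v ∈ C | v ∈ ends a} = ∑ v ∈ C, #{a | v ∈ ends a} :=
  (sum_card_bipartiteAbove_eq_sum_card_bipartiteBelow fun v a ↦ v ∈ ends a).symm

variable [Fintype V]

/-- The edge boundary (cut) `∂C` of a vertex set: the edges with one end in `C` and one outside. -/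
def boundary (ends : E → Sym2 V) (C : Finset V) : Finset E :=
  {a | (∃ v ∈ ends a, v ∈ C) ∧ ∃ w ∈ ends a, w ∉ C}

lemma mem_boundary {C : Finset V} {a : E} :
    a ∈ boundary ends C ↔ (∃ v ∈ ends a, v ∈ C) ∧ ∃ w ∈ ends a, w ∉ C := by
  simp [boundary]

lemma mem_boundary_of_ends_eq {C : Finset V} {a : E} {v w : V} (h : ends a = s(v, w)) :
    a ∈ boundary ends C ↔ ¬(v ∈ C ↔ w ∈ C) := by
  simp only [mem_boundary, h, Sym2.mem_iff, exists_eq_or_imp, exists_eq_left]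
  tauto

lemma boundary_univ : boundary ends univ = ∅ := by
  simp [boundary]

section Packing

variable {𝒦 : Finset (Finset V)} {S : Finset V} {a : E}

lemma card_filter_mem_boundary_le_two [DecidableEq E]
    (h𝒦 : (𝒦 : Set (Finset V)).PairwiseDisjoint id) (a : E) :
    #{K ∈ 𝒦 | a ∈ boundary ends K} ≤ 2 := by
  calc #{K ∈ 𝒦 | a ∈ boundary ends K}
      ≤ #(ends a).toFinset := by
        refine card_le_card_of_forall_subsingleton (fun K v ↦ v ∈ K) (fun K hK ↦ ?_) ?_
        · simpa using (mem_boundary.1 (mem_filter.1 hK).2).1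
        · rintro v - K ⟨hK, hvK⟩ L ⟨hL, hvL⟩
          exact h𝒦.elim_finset (mem_filter.1 hK).1 (mem_filter.1 hL).1 v hvK hvL
    _ ≤ 2 := by
        rw [Sym2.card_toFinset]
        split_ifs <;> simp

/-- Each `K` is charged to the end of `a` outside it, as that end determines the end inside it. -/
lemma card_filter_mem_boundary_le_card_filter_mem_ends [DecidableEq E]
    (h𝒦 : (𝒦 : Set (Finset V)).PairwiseDisjoint id)
    (hS : ∀ K ∈ 𝒦, a ∈ boundary ends K → ∃ v ∈ ends a, v ∈ S ∧ v ∉ K) :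
    #{K ∈ 𝒦 | a ∈ boundary ends K} ≤ #{v ∈ S | v ∈ ends a} := by
  refine card_le_card_of_forall_subsingleton (fun K v ↦ v ∉ K) (fun K hK ↦ ?_) ?_
  · obtain ⟨v, hva, hvS, hvK⟩ := hS K (mem_filter.1 hK).1 (mem_filter.1 hK).2
    exact ⟨v, mem_filter.2 ⟨hvS, hva⟩, hvK⟩
  · rintro v hv K ⟨hK, hvK⟩ L ⟨hL, hvL⟩
    obtain ⟨w, hvw⟩ := Sym2.mem_iff_exists.1 (mem_filter.1 hv).2
    rw [mem_filter, mem_boundary_of_ends_eq hvw] at hK hL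
    exact h𝒦.elim_finset hK.1 hL.1 w (by tauto) (by tauto)

lemma sum_card_boundary_le (R : Finset E)
    (h𝒦 : (𝒦 : Set (Finset V)).PairwiseDisjoint id)
    (hS : ∀ K ∈ 𝒦, ∀ a ∈ boundary ends K, a ∉ R → ∃ v ∈ ends a, v ∈ S ∧ v ∉ K) :
    ∑ K ∈ 𝒦, #(boundary ends K) ≤ ∑ v ∈ S, #{a | v ∈ ends a} + 2 * #R := by
  classical
  have boundary_count_le (a : E) : #{K ∈ 𝒦 | a ∈ boundary ends K} ≤
      #{v ∈ S | v ∈ ends a} + if a ∈ R then 2 else 0 := by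
    split_ifs with ha
    · exact le_add_left (card_filter_mem_boundary_le_two h𝒦 a)
    · exact card_filter_mem_boundary_le_card_filter_mem_ends h𝒦 fun K hK haK ↦ hS K hK a haK ha
  calc ∑ K ∈ 𝒦, #(boundary ends K)
      = ∑ K ∈ 𝒦, #{a | a ∈ boundary ends K} := by simp
    _ = ∑ a, #{K ∈ 𝒦 | a ∈ boundary ends K} :=
        sum_card_bipartiteAbove_eq_sum_card_bipartiteBelow fun K a ↦ a ∈ boundary ends K
    _ ≤ ∑ a, (#{v ∈ S | v ∈ ends a} + if a ∈ R then 2 else 0) :=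
        sum_le_sum fun a _ ↦ boundary_count_le a
    _ = ∑ v ∈ S, #{a | v ∈ ends a} + 2 * #R := by
        simp [sum_add_distrib, sum_card_filter_mem_ends, mul_comm]

end Packing

end Boundary

section Tutte

variable {V : Type*} {G : SimpleGraph V}

lemma mem_image_supp_of_adj {u : Set V}
    (c : ((⊤ : G.Subgraph).deleteVerts u).coe.ConnectedComponent) {v w : V}
    (hv : v ∈ Subtype.val '' c.supp) (hw : w ∉ u) (hvw : G.Adj v w) :
    w ∈ Subtype.val '' c.supp := by
  have hv' : v ∉ u := by
    obtain ⟨x, -, rfl⟩ := hv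
    exact x.2.2
  exact SimpleGraph.ConnectedComponent.mem_coe_supp_of_adj hv ⟨trivial, hw⟩
    (SimpleGraph.Subgraph.deleteVerts_adj.2 ⟨trivial, hv', trivial, hw, hvw⟩)

variable [Fintype V]

/-- The gain over Tutte's strict inequality comes from the two sides having the same parity. -/
lemma ncard_add_two_le_ncard_oddComponents (hV : Even (Fintype.card V)) {u : Set V}
    (hu : G.IsTutteViolator u) :
    u.ncard + 2 ≤ ((⊤ : G.Subgraph).deleteVerts u).coe.oddComponents.ncard := by
  have card_verts : Nat.card ((⊤ : G.Subgraph).deleteVerts u).verts + u.ncard =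
      Fintype.card V := by
    rw [SimpleGraph.Subgraph.deleteVerts_verts, SimpleGraph.Subgraph.verts_top,
      ← Set.compl_eq_univ_sdiff, Nat.card_coe_set_eq, add_comm, Set.ncard_add_ncard_compl,
      Nat.card_eq_fintype_card]
  have odd_iff := ((⊤ : G.Subgraph).deleteVerts u).coe.odd_ncard_oddComponents
  unfold SimpleGraph.IsTutteViolator at hu
  grind

lemma exists_odd_packing_of_forall_not_isPerfectMatching (hV : Even (Fintype.card V))
    (hG : ∀ M : G.Subgraph, ¬M.IsPerfectMatching) :
    ∃ (S : Finset V) (𝒦 : Finset (Finset V)), #S + 2 ≤ #𝒦 ∧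
      (𝒦 : Set (Finset V)).PairwiseDisjoint id ∧
      ∀ K ∈ 𝒦, Odd #K ∧ ∀ v ∈ K, ∀ w, G.Adj v w → w ∉ K → w ∈ S := by
  classical
  obtain ⟨u, hu⟩ : ∃ u, G.IsTutteViolator u := by
    simpa only [not_forall, not_not] using mt SimpleGraph.tutte.2 (not_exists.2 hG)
  let vertices (c : ((⊤ : G.Subgraph).deleteVerts u).coe.ConnectedComponent) : Finset V :=
    (Subtype.val '' c.supp).toFinset
  have vertices_injective : Function.Injective vertices := fun c d hcd ↦
    SimpleGraph.ConnectedComponent.supp_injective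
      (Subtype.val_injective.image_injective (Set.toFinset_inj.1 hcd))
  let odds := (Set.toFinite ((⊤ : G.Subgraph).deleteVerts u).coe.oddComponents).toFinset
  refine ⟨u.toFinset, odds.image vertices, ?_, ?_, ?_⟩
  · rw [card_image_of_injective _ vertices_injective, ← Set.ncard_eq_toFinset_card',
      ← Set.ncard_eq_toFinset_card]
    exact ncard_add_two_le_ncard_oddComponents hV hu
  · rw [coe_image]
    rintro _ ⟨c, -, rfl⟩ _ ⟨d, -, rfl⟩ hcd
    have hcd' : c ≠ d := fun h ↦ hcd (h ▸ rfl)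
    rw [Function.onFun, id, id, Set.disjoint_toFinset, Set.disjoint_image_iff Subtype.val_injective]
    exact SimpleGraph.pairwise_disjoint_supp_connectedComponent _ hcd'
  · simp only [mem_image, forall_exists_index, and_imp, odds, Set.Finite.mem_toFinset]
    rintro _ c hc rfl
    refine ⟨?_, fun v hv w hvw hw ↦ ?_⟩
    · rwa [← Set.ncard_eq_toFinset_card', Set.ncard_image_of_injective _ Subtype.val_injective]
    · rw [Set.mem_toFinset] at hv hw ⊢
      by_contra hwu
      exact hw (mem_image_supp_of_adj c hv hwu hvw)

end Tutte

variable {V E : Type} {ends : E → Sym2 V}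

lemma exists_isPerfectMatching_subset {F : Set E}
    {M : (SimpleGraph.fromEdgeSet (ends '' F)).Subgraph} (hM : M.IsPerfectMatching) :
    ∃ N ⊆ F, IsPerfectMatching ends N := by
  have edges_lift : Set.SurjOn ends F M.edgeSet := fun z hz ↦ by
    have := M.edgeSet_subset hz
    rw [SimpleGraph.edgeSet_fromEdgeSet] at this
    exact this.1
  obtain ⟨N, hNF, hN⟩ := edges_lift.exists_bijOn_subset
  refine ⟨N, hNF, fun v ↦ ?_⟩
  obtain ⟨w, hvw, hw⟩ := SimpleGraph.Subgraph.isPerfectMatching_iff.1 hM v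
  obtain ⟨a, haN, ha⟩ := hN.surjOn (SimpleGraph.Subgraph.mem_edgeSet.2 hvw)
  refine ⟨a, ⟨haN, ha ▸ Sym2.mem_mk_left v w⟩, fun b ⟨hbN, hvb⟩ ↦ hN.injOn hbN haN ?_⟩
  obtain ⟨x, hx⟩ := Sym2.mem_iff_exists.1 hvb
  have hvx : M.Adj v x := SimpleGraph.Subgraph.mem_edgeSet.1 (hx ▸ hN.mapsTo hbN)
  rw [hx, ha, hw x hvx]

lemma IsPerfectMatching.isTwoFactor_compl (hc : IsCubic ends) {M : Set E}
    (hM : IsPerfectMatching ends M) : IsTwoFactor ends Mᶜ := by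
  intro v
  obtain ⟨a, ⟨haM, hva⟩, ha⟩ := hM v
  have compl_at_v : {b | b ∈ Mᶜ ∧ v ∈ ends b} = {b | v ∈ ends b} \ {a} := by
    ext b
    have := ha b
    simp only [Set.mem_ofPred_eq, Set.mem_compl_iff, Set.mem_sdiff, Set.mem_singleton_iff]
    grind
  rw [compl_at_v, Set.ncard_sdiff_singleton_of_mem (show a ∈ {b | v ∈ ends b} from hva), hc v]

variable [DecidableEq V] [Fintype E]

lemma IsCubic.card_filter_mem_ends (hc : IsCubic ends) (v : V) : #{a | v ∈ ends a} = 3 := by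
  rw [← hc v, Set.ncard_eq_toFinset_card', Set.toFinset_ofPred]

variable [Fintype V]

/-- Plesník's theorem is the case of an `(r - 1)`-edge-connected `r`-regular graph of even order,
where the bound on odd cuts holds by parity. -/
theorem exists_isPerfectMatching_disjoint {r : ℕ}
    (hdeg : ∀ v, #{a | v ∈ ends a} ≤ r)
    (hodd : ∀ C : Finset V, Odd #C → r ≤ #(boundary ends C)) {R : Finset E} (hR : #R < r) :
    ∃ M, IsPerfectMatching ends M ∧ Disjoint M R := by
  classical
  have even_card : Even (Fintype.card V) := by
    by_contra h
    have := hodd univ (Nat.not_even_iff_odd.1 h)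
    simp only [boundary_univ, card_empty] at this
    lia
  suffices ∃ M : (SimpleGraph.fromEdgeSet (ends '' (R : Set E)ᶜ)).Subgraph,
      M.IsPerfectMatching by
    obtain ⟨M, hM⟩ := this
    obtain ⟨N, hNR, hN⟩ := exists_isPerfectMatching_subset hM
    exact ⟨N, hN, Set.disjoint_left.2 hNR⟩
  by_contra! hM
  obtain ⟨S, 𝒦, hS𝒦, h𝒦, hK⟩ := exists_odd_packing_of_forall_not_isPerfectMatching even_card hM
  have boundary_end_in_S : ∀ K ∈ 𝒦, ∀ a ∈ boundary ends K, a ∉ R →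
      ∃ v ∈ ends a, v ∈ S ∧ v ∉ K := by
    intro K hK𝒦 a haK haR
    obtain ⟨⟨v, hva, hvK⟩, w, hwa, hwK⟩ := mem_boundary.1 haK
    have hvw : v ≠ w := by rintro rfl; exact hwK hvK
    have ha : ends a = s(v, w) := (Sym2.mem_and_mem_iff hvw).1 ⟨hva, hwa⟩
    refine ⟨w, hwa, (hK K hK𝒦).2 v hvK w ?_ hwK, hwK⟩
    exact (SimpleGraph.fromEdgeSet_adj _).2 ⟨⟨a, haR, ha⟩, hvw⟩
  have count := calc r * #𝒦
      = ∑ _K ∈ 𝒦, r := by simp [mul_comm]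
    _ ≤ ∑ K ∈ 𝒦, #(boundary ends K) := sum_le_sum fun K hK𝒦 ↦ hodd K (hK K hK𝒦).1
    _ ≤ ∑ v ∈ S, #{a | v ∈ ends a} + 2 * #R := sum_card_boundary_le R h𝒦 boundary_end_in_S
    _ ≤ r * #S + 2 * #R := by
        gcongr
        simpa [mul_comm] using sum_le_card_nsmul S _ r fun v _ ↦ hdeg v
  nlinarith

lemma NoLoops.odd_card_filter_mem_ends_iff (hl : NoLoops ends) (C : Finset V) (a : E) :
    Odd #{v ∈ C | v ∈ ends a} ↔ a ∈ boundary ends C := by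
  cases hvw : ends a with | _ v w
  have hne : v ≠ w := by simpa [hvw] using hl a
  rw [mem_boundary_of_ends_eq hvw]
  simp only [Sym2.mem_iff, filter_or, filter_eq']
  by_cases hv : v ∈ C <;> by_cases hw : w ∈ C <;> simp [hv, hw, hne]

lemma NoLoops.odd_card_boundary_iff (hl : NoLoops ends) (C : Finset V) :
    Odd #(boundary ends C) ↔ Odd (∑ v ∈ C, #{a | v ∈ ends a}) := by
  have boundary_eq : boundary ends C = univ.filter fun a ↦ Odd #{v ∈ C | v ∈ ends a} := by
    ext a
    rw [mem_filter_univ, hl.odd_card_filter_mem_ends_iff]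
  rw [← sum_card_filter_mem_ends, odd_sum_iff_odd_card_odd, boundary_eq]

lemma Reach.mem_iff_mem {F : Set E} {C : Finset V} (hF : ∀ a ∈ F, a ∉ boundary ends C) {v w : V}
    (h : Reach ends F v w) : v ∈ C ↔ w ∈ C := by
  induction h with
  | refl => rfl
  | tail _ hstep ih =>
    obtain ⟨a, haF, ha⟩ := hstep
    exact ih.trans (not_not.1 ((mem_boundary_of_ends_eq ha).not.1 (hF a haF)))

lemma Bridgeless.card_boundary_ne_one (hb : Bridgeless ends) (C : Finset V) :
    #(boundary ends C) ≠ 1 := by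
  intro h
  obtain ⟨a, ha⟩ := card_eq_one.1 h
  have haC : a ∈ boundary ends C := ha ▸ mem_singleton_self a
  have only_a : ∀ b ∈ {b | b ≠ a}, b ∉ boundary ends C := fun b hba hbC ↦
    hba (mem_singleton.1 (ha ▸ hbC))
  cases hvw : ends a with | _ v w
  exact (mem_boundary_of_ends_eq hvw).1 haC ((hb a v w hvw).mem_iff_mem only_a)

lemma three_le_card_boundary_of_odd (hl : NoLoops ends) (hc : IsCubic ends) (hb : Bridgeless ends)
    {C : Finset V} (hC : Odd #C) : 3 ≤ #(boundary ends C) := by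
  have boundary_odd : Odd #(boundary ends C) := by
    rw [hl.odd_card_boundary_iff, sum_congr rfl fun v _ ↦ hc.card_filter_mem_ends v, sum_const,
      smul_eq_mul]
    exact hC.mul (by decide)
  have := hb.card_boundary_ne_one C
  grind

end Mg

theorem stmt19 {V E : Type} [Fintype V] [Fintype E] (ends : E → Sym2 V)
    (hl : Mg.NoLoops ends) (hc : Mg.IsCubic ends) (hb : Mg.Bridgeless ends) :
    ∀ e f : E, ∃ F : Set E, Mg.IsTwoFactor ends F ∧ e ∈ F ∧ f ∈ F := by
  classical
  intro e f
  have card_pair_lt : Finset.card {e, f} < 3 := Finset.card_le_two.trans_lt (by norm_num)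
  obtain ⟨M, hM, hMef⟩ := Mg.exists_isPerfectMatching_disjoint
    (fun v ↦ (hc.card_filter_mem_ends v).le)
    (fun _ hC ↦ Mg.three_le_card_boundary_of_odd hl hc hb hC) card_pair_lt
  exact ⟨Mᶜ, hM.isTwoFactor_compl hc, fun he ↦ Set.disjoint_left.1 hMef he (by simp),
    fun hf ↦ Set.disjoint_left.1 hMef hf (by simp)⟩
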